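/- Let μ and ν be von Mises distributions on [0,1) with densities P_{θ,κ} and P_{θ̃,κ̃} that are not identical, and cumulative distribution functions F_μ, F_ν. Then for every t ∈ [0,1) with F_μ(t) − F_ν(t) = LevMed(F_μ − F_ν), it holds that P_{θ,κ}(t) ≠ P_{θ̃,κ̃}(t); that is, the derivative of F_μ − F_ν is nonzero at every intersection of F_μ − F_ν with its level median. -/

import Mathlib

/-! The difference `G = F_μ − F_ν` of the two distribution functions is continuous and, after periodic
extension, lives on the circle. Let `t` be a zero of `D = G' = P_{θ,κ} − P_{θ',κ'}`. Comparing
exponents, `D (t + u)` has for `u ∈ (0,1)` the sign of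
`A (cos 2πu − 1) + B sin 2πu = 2 sin(πu) (B cos πu − A sin πu)`,
where `A`, `B` depend on the parameters and on `t`. On `(0,1)` the second factor divided by
`sin πu` is `B cot πu − A`, which is strictly monotone for `B ≠ 0`. As `D` has integral zero over
a period, `u ↦ G (t + u) − G t` then increases before it decreases back to zero (or the other way
round), so `G t` is a strict global extremum of `G` (`integral_pos_of_sign`,
`cdf_diff_strict_extremum`). If `B = 0` and `A ≠ 0`, then `D` has constant sign, contradicting
the vanishing integral, and if `A = B = 0` the densities coincide.

A strict global extremum cannot be the level median: the median is attained as a minimizer of the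
cost (`levMed_mem`), while moving `α` slightly inwards from a value that almost all of `f` lies
strictly below (or above) decreases the cost (`not_minimizer_of_ae_lt`). -/

open MeasureTheory Filter Real
open scoped ENNReal NNReal

noncomputable section

/-- Normalizing constant of the von Mises density:
`C(κ) = (∫₀¹ exp(κ cos(2πs)) ds)⁻¹`. -/
def vonMisesC (κ : ℝ) : ℝ := (∫ s in (0:ℝ)..1, Real.exp (κ * Real.cos (2 * π * s)))⁻¹

/-- Von Mises density `P_{θ,κ}(t) = C(κ)·exp(κ cos(2π(t−θ)))` on `[0,1)`. -/
def vonMisesDensity (θ κ t : ℝ) : ℝ :=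
  vonMisesC κ * Real.exp (κ * Real.cos (2 * π * (t - θ)))

/-- Cumulative distribution function `F_μ(t) = μ([0,t])`. -/
def Fcdf (μ : Measure ℝ) (t : ℝ) : ℝ := (μ (Set.Icc 0 t)).toReal

/-- Cost functional `φ(α) = ∫₀¹ |f t − α| dt`. -/
def levCost (f : ℝ → ℝ) (α : ℝ) : ℝ := ∫ t in Set.Ico (0:ℝ) 1, |f t - α|

/-- The level median: the smallest minimizer of `α ↦ ∫₀¹ |f t − α| dt`. -/
def levMed (f : ℝ → ℝ) : ℝ := sInf {α : ℝ | ∀ β : ℝ, levCost f α ≤ levCost f β}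

/-! ### The level median -/

/-- The uniform distribution on `[0,1)`. -/
abbrev unifI : Measure ℝ := volume.restrict (Set.Ico (0:ℝ) 1)

instance : IsProbabilityMeasure unifI := ⟨by simp [unifI]⟩

lemma integrable_abs_sub {f : ℝ → ℝ} (hf : Measurable f) {b : ℝ} (hb : ∀ x, |f x| ≤ b) (α : ℝ) :
    Integrable (fun x => |f x - α|) unifI := by
  have h : Integrable f unifI :=
    Integrable.of_bound hf.aestronglyMeasurable b (Eventually.of_forall hb)
  exact (h.sub (integrable_const α)).abs

lemma levCost_le_add {f : ℝ → ℝ} (hf : Measurable f) {b : ℝ} (hb : ∀ x, |f x| ≤ b) (α β : ℝ) :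
    levCost f α ≤ levCost f β + |α - β| := by
  have h : levCost f β + |α - β| = ∫ x, (|f x - β| + |α - β|) ∂unifI := by
    rw [integral_add (integrable_abs_sub hf hb β) (integrable_const _)]
    simp [levCost]
  rw [h]
  refine integral_mono (integrable_abs_sub hf hb α)
    ((integrable_abs_sub hf hb β).add (integrable_const _)) fun x => ?_
  have := abs_sub_le (f x) β α
  rw [abs_sub_comm β α] at this
  exact this

lemma continuous_levCost {f : ℝ → ℝ} (hf : Measurable f) {b : ℝ} (hb : ∀ x, |f x| ≤ b) :
    Continuous (levCost f) := by
  have : LipschitzWith 1 (levCost f) := by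
    refine LipschitzWith.of_le_add fun α β => ?_
    rw [Real.dist_eq]
    exact levCost_le_add hf hb α β
  exact this.continuous

lemma abs_sub_le_levCost {f : ℝ → ℝ} (hf : Measurable f) {b : ℝ} (hb : ∀ x, |f x| ≤ b) (α : ℝ) :
    |α| - b ≤ levCost f α := by
  have h : |α| - b = ∫ _x, (|α| - b) ∂unifI := by simp
  rw [h]
  refine integral_mono (integrable_const _) (integrable_abs_sub hf hb α) fun x => ?_
  have h1 := abs_sub_abs_le_abs_sub α (f x)
  rw [abs_sub_comm] at h1
  have := hb x
  show |α| - b ≤ |f x - α|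
  linarith

/-- The infimum in the definition of the level median of a bounded measurable function is attained,
because the cost is continuous and coercive. -/
lemma levMed_mem {f : ℝ → ℝ} (hf : Measurable f) {b : ℝ} (hb : ∀ x, |f x| ≤ b) (β : ℝ) :
    levCost f (levMed f) ≤ levCost f β := by
  have hc := continuous_levCost hf hb
  have hmem : levMed f ∈ {α : ℝ | ∀ β : ℝ, levCost f α ≤ levCost f β} := by
    refine IsClosed.csInf_mem ?_ ?_ ?_
    · simp only [Set.ofPred_forall]
      exact isClosed_iInter fun β => isClosed_le hc continuous_const
    · refine hc.exists_forall_le (tendsto_atTop_mono (abs_sub_le_levCost hf hb) ?_)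
      exact tendsto_atTop_add_const_right _ (-b) (tendsto_norm_cocompact_atTop (E := ℝ))
    · refine ⟨-(levCost f 0 + b), fun α hα => ?_⟩
      have h1 := hα 0
      have h2 := abs_sub_le_levCost hf hb α
      have h3 := neg_abs_le α
      linarith
  exact hmem β

/-- For `β < M` close to `M`, the cost drops by `M - β` on `{f ≤ β}` and grows by at most `M - β`
on `{β < f}`; the latter set has small measure. -/
lemma not_minimizer_of_ae_lt {f : ℝ → ℝ} (hf : Measurable f) {b : ℝ} (hb : ∀ x, |f x| ≤ b)
    {M : ℝ} (hM : ∀ᵐ x ∂unifI, f x < M) : ∃ β, levCost f β < levCost f M := by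
  have hlim : Tendsto (fun n : ℕ => unifI {x | M - 1 / ((n:ℝ) + 1) < f x}) atTop (nhds 0) := by
    have h0 : unifI (⋂ n : ℕ, {x | M - 1 / ((n:ℝ) + 1) < f x}) = 0 := by
      refine measure_mono_null (fun x hx => ?_) hM
      simp only [Set.mem_iInter, Set.mem_ofPred_eq] at hx
      show ¬ f x < M
      intro hlt
      obtain ⟨n, hn⟩ := exists_nat_one_div_lt (sub_pos.2 hlt)
      have := hx n
      linarith
    rw [← h0]
    refine tendsto_measure_iInter_atTop
      (fun n => (measurableSet_lt measurable_const hf).nullMeasurableSet) ?_ ⟨0, measure_ne_top _ _⟩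
    intro m n hmn x hx
    have := Nat.one_div_le_one_div (α := ℝ) hmn
    simp only [Set.mem_ofPred_eq] at hx ⊢
    linarith
  obtain ⟨n, hn⟩ := (hlim.eventually (gt_mem_nhds (show (0:ℝ≥0∞) < 1 / 2 by simp))).exists
  set ε : ℝ := 1 / ((n:ℝ) + 1) with hε
  have hεpos : 0 < ε := by positivity
  set E : Set ℝ := {x | M - ε < f x} with hE
  have hEm : MeasurableSet E := measurableSet_lt measurable_const hf
  have hEr : unifI.real E < 1 / 2 := by
    have := (ENNReal.toReal_lt_toReal (measure_ne_top _ _) (by simp)).2 hn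
    simpa [Measure.real] using this
  have hint : Integrable (E.indicator fun _ => 2 * ε) unifI := (integrable_const _).indicator hEm
  refine ⟨M - ε, ?_⟩
  have hle : levCost f (M - ε) ≤ ∫ x, (|f x - M| - ε + E.indicator (fun _ => 2 * ε) x) ∂unifI := by
    refine integral_mono_ae (integrable_abs_sub hf hb _)
      (((integrable_abs_sub hf hb _).sub (integrable_const _)).add hint) ?_
    filter_upwards [hM] with x hx
    rw [abs_of_neg (show f x - M < 0 by linarith)]
    by_cases hxE : x ∈ E
    · have : M - ε < f x := hxE
      rw [Set.indicator_of_mem hxE, abs_of_pos (by linarith)]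
      linarith
    · have : ¬ M - ε < f x := hxE
      rw [Set.indicator_of_notMem hxE, abs_of_nonpos (by linarith)]
      linarith
  have heq : ∫ x, (|f x - M| - ε + E.indicator (fun _ => 2 * ε) x) ∂unifI
      = levCost f M - ε + unifI.real E * (2 * ε) := by
    have hsub : Integrable (fun x => |f x - M| - ε) unifI :=
      (integrable_abs_sub hf hb _).sub (integrable_const _)
    rw [integral_add hsub hint,
      integral_sub (integrable_abs_sub hf hb _) (integrable_const _),
      integral_indicator_const _ hEm]
    simp [levCost]
  rw [heq] at hle
  nlinarith

lemma levMed_ne_of_ae_lt {f : ℝ → ℝ} (hf : Measurable f) {b : ℝ} (hb : ∀ x, |f x| ≤ b)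
    {M : ℝ} (hM : ∀ᵐ x ∂unifI, f x < M) : M ≠ levMed f := by
  rintro rfl
  obtain ⟨β, hβ⟩ := not_minimizer_of_ae_lt hf hb hM
  exact absurd (levMed_mem hf hb β) (not_le.2 hβ)

lemma levCost_neg (f : ℝ → ℝ) (α : ℝ) : levCost (fun x => -f x) (-α) = levCost f α := by
  unfold levCost
  congr 1
  ext x
  rw [← abs_neg]
  congr 1
  ring

lemma levMed_ne_of_ae_gt {f : ℝ → ℝ} (hf : Measurable f) {b : ℝ} (hb : ∀ x, |f x| ≤ b)
    {M : ℝ} (hM : ∀ᵐ x ∂unifI, M < f x) : M ≠ levMed f := by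
  rintro rfl
  obtain ⟨β, hβ⟩ := not_minimizer_of_ae_lt (f := fun x => -f x) hf.neg (b := b) (by simpa using hb)
    (M := -levMed f) (by filter_upwards [hM] with x hx using neg_lt_neg hx)
  rw [levCost_neg, ← neg_neg β, levCost_neg] at hβ
  exact absurd (levMed_mem hf hb (-β)) (not_le.2 hβ)

/-! ### Von Mises densities and their distribution functions -/

lemma vonMisesC_pos (κ : ℝ) : 0 < vonMisesC κ := by
  unfold vonMisesC
  refine inv_pos.2 (intervalIntegral.intervalIntegral_pos_of_pos ?_ (fun x => exp_pos _) one_pos)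
  exact Continuous.intervalIntegrable (by fun_prop) _ _

lemma continuous_vonMisesDensity (θ κ : ℝ) : Continuous (vonMisesDensity θ κ) := by
  unfold vonMisesDensity
  fun_prop

lemma vonMisesDensity_pos (θ κ t : ℝ) : 0 < vonMisesDensity θ κ t :=
  mul_pos (vonMisesC_pos κ) (exp_pos _)

lemma vonMisesDensity_periodic (θ κ : ℝ) : Function.Periodic (vonMisesDensity θ κ) 1 := by
  intro t
  unfold vonMisesDensity
  rw [show 2 * π * (t + 1 - θ) = 2 * π * (t - θ) + 2 * π by ring, Real.cos_add_two_pi]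

lemma integral_vonMisesDensity (θ κ a : ℝ) : ∫ x in a..a + 1, vonMisesDensity θ κ x = 1 := by
  -- by periodicity the window can be moved to start at `θ`
  rw [(vonMisesDensity_periodic θ κ).intervalIntegral_add_eq a θ]
  unfold vonMisesDensity
  rw [intervalIntegral.integral_const_mul,
    intervalIntegral.integral_comp_sub_right (fun x => Real.exp (κ * Real.cos (2 * π * x))) θ]
  have h := vonMisesC_pos κ
  unfold vonMisesC at h ⊢
  rw [sub_self, add_sub_cancel_left]
  exact inv_mul_cancel₀ (inv_pos.1 h).ne'

/-- The von Mises distribution as a measure on `ℝ` supported on `[0,1)`. -/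
abbrev vonMisesMeasure (θ κ : ℝ) : Measure ℝ :=
  (volume.restrict (Set.Ico (0:ℝ) 1)).withDensity fun t => ENNReal.ofReal (vonMisesDensity θ κ t)

instance (θ κ : ℝ) : IsFiniteMeasure (vonMisesMeasure θ κ) :=
  isFiniteMeasure_withDensity_ofReal
    (((continuous_vonMisesDensity θ κ).integrableOn_Icc.mono_set Set.Ico_subset_Icc_self).2)

lemma Fcdf_eq_integral (θ κ : ℝ) {s : ℝ} (hs : s ∈ Set.Ico (0:ℝ) 1) :
    Fcdf (vonMisesMeasure θ κ) s = ∫ x in (0:ℝ)..s, vonMisesDensity θ κ x := by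
  have hsub : Set.Icc 0 s ⊆ Set.Ico (0:ℝ) 1 := fun x hx => ⟨hx.1, hx.2.trans_lt hs.2⟩
  unfold Fcdf vonMisesMeasure
  rw [withDensity_apply _ measurableSet_Icc, Measure.restrict_restrict measurableSet_Icc,
    Set.inter_eq_left.2 hsub, intervalIntegral.integral_of_le hs.1,
    ← integral_Icc_eq_integral_Ioc, integral_eq_lintegral_of_nonneg_ae]
  · exact Eventually.of_forall fun x => (vonMisesDensity_pos θ κ x).le
  · exact (continuous_vonMisesDensity θ κ).aestronglyMeasurable

lemma measurable_Fcdf (μ : Measure ℝ) [IsFiniteMeasure μ] : Measurable (Fcdf μ) := by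
  refine Monotone.measurable fun s t hst => ?_
  exact ENNReal.toReal_mono (measure_ne_top _ _) (measure_mono (Set.Icc_subset_Icc_right hst))

lemma abs_Fcdf_sub_le (μ ν : Measure ℝ) [IsFiniteMeasure μ] [IsFiniteMeasure ν] (t : ℝ) :
    |Fcdf μ t - Fcdf ν t| ≤ μ.real Set.univ + ν.real Set.univ := by
  have h1 : Fcdf μ t ≤ μ.real Set.univ := measureReal_mono (Set.subset_univ _)
  have h2 : Fcdf ν t ≤ ν.real Set.univ := measureReal_mono (Set.subset_univ _)
  have h3 : 0 ≤ Fcdf μ t := ENNReal.toReal_nonneg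
  have h4 : 0 ≤ Fcdf ν t := ENNReal.toReal_nonneg
  rw [abs_le]
  constructor <;> linarith

/-! ### Crossings of the densities are strict extrema of the cdf difference -/

/-- If `D (t + u)` has on `(0,1)` the sign of `b cos πu - a sin πu` with `b > 0` and `D` has
integral zero over the period, its primitive started at `t` is positive inside the period:
`D` is positive before any point where the trigonometric factor is nonnegative, and negative after
any point where it is nonpositive. -/
lemma integral_pos_of_sign {D : ℝ → ℝ} (hD : Continuous D) {t a b : ℝ} (hb : 0 < b)
    (hint : ∫ x in t..t + 1, D x = 0)
    (hpos : ∀ u ∈ Set.Ioo (0:ℝ) 1, 0 < b * cos (π * u) - a * sin (π * u) → 0 < D (t + u))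
    (hneg : ∀ u ∈ Set.Ioo (0:ℝ) 1, b * cos (π * u) - a * sin (π * u) < 0 → D (t + u) < 0)
    {v : ℝ} (hv : v ∈ Set.Ioo t (t + 1)) : 0 < ∫ x in t..v, D x := by
  have hsin : ∀ u ∈ Set.Ioo (0:ℝ) 1, 0 < sin (π * u) := fun u hu =>
    sin_pos_of_pos_of_lt_pi (mul_pos pi_pos hu.1) (by nlinarith [pi_pos, hu.2])
  -- strict monotonicity of the cotangent, with denominators cleared
  have hcot : ∀ u w : ℝ, u ∈ Set.Ioo (0:ℝ) 1 → w ∈ Set.Ioo (0:ℝ) 1 → u < w →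
      sin (π * u) * (b * cos (π * w) - a * sin (π * w))
        < sin (π * w) * (b * cos (π * u) - a * sin (π * u)) := by
    intro u w hu hw huw
    have h : 0 < sin (π * (w - u)) := hsin _ ⟨by linarith, by linarith [hw.2, hu.1]⟩
    rw [mul_sub, sin_sub] at h
    nlinarith [mul_pos hb h]
  have hv' : v - t ∈ Set.Ioo (0:ℝ) 1 := ⟨by linarith [hv.1], by linarith [hv.2]⟩
  rcases le_total 0 (b * cos (π * (v - t)) - a * sin (π * (v - t))) with hq | hq
  · refine intervalIntegral.intervalIntegral_pos_of_pos_on (hD.intervalIntegrable _ _)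
      (fun x hx => ?_) hv.1
    have hx' : x - t ∈ Set.Ioo (0:ℝ) 1 := ⟨by linarith [hx.1], by linarith [hx.2, hv.2]⟩
    have h1 := hcot _ _ hx' hv' (by linarith [hx.2])
    have h2 := hpos _ hx' (pos_of_mul_pos_right
      ((mul_nonneg (hsin _ hx').le hq).trans_lt h1) (hsin _ hv').le)
    simpa using h2
  · have hneg' : 0 < ∫ x in v..t + 1, -D x := by
      refine intervalIntegral.intervalIntegral_pos_of_pos_on (hD.neg.intervalIntegrable _ _)
        (fun x hx => ?_) hv.2
      have hx' : x - t ∈ Set.Ioo (0:ℝ) 1 := ⟨by linarith [hx.1, hv.1], by linarith [hx.2]⟩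
      have h1 := hcot _ _ hv' hx' (by linarith [hx.1])
      have h3 : b * cos (π * (x - t)) - a * sin (π * (x - t)) < 0 := by
        by_contra hcon
        have h4 := mul_nonneg (hsin _ hv').le (not_lt.1 hcon)
        have h5 := mul_nonpos_of_nonneg_of_nonpos (hsin _ hx').le hq
        linarith
      have h2 := hneg _ hx' h3
      rw [add_sub_cancel] at h2
      linarith
    rw [intervalIntegral.integral_neg] at hneg'
    have := intervalIntegral.integral_add_adjacent_intervals
      (hD.intervalIntegrable (μ := volume) t v) (hD.intervalIntegrable v (t + 1))
    linarith

/-- At a crossing `t` of the two densities, the sign of their difference at `t + u` is that of a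
difference of exponents which vanishes at `u = 0`. -/
lemma density_lt_iff {θ θ' κ κ' t : ℝ}
    (ht : vonMisesDensity θ κ t = vonMisesDensity θ' κ' t) (u : ℝ) :
    vonMisesDensity θ' κ' (t + u) < vonMisesDensity θ κ (t + u) ↔
      0 < sin (π * u) *
        ((κ' * sin (2 * π * (t - θ')) - κ * sin (2 * π * (t - θ))) * cos (π * u)
        - (κ * cos (2 * π * (t - θ)) - κ' * cos (2 * π * (t - θ'))) * sin (π * u)) := by
  have key : ∀ θ κ : ℝ, vonMisesDensity θ κ (t + u) = vonMisesDensity θ κ t *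
      Real.exp (2 * sin (π * u) * (-κ * sin (2 * π * (t - θ)) * cos (π * u)
        - κ * cos (2 * π * (t - θ)) * sin (π * u))) := by
    intro θ κ
    unfold vonMisesDensity
    rw [mul_assoc (vonMisesC κ), ← Real.exp_add, show 2 * π * (t + u - θ) = 2 * π * (t - θ) + 2 * (π * u) by ring,
      Real.cos_add, Real.cos_two_mul, Real.sin_two_mul]
    congr 2
    linear_combination (2 * κ * cos (2 * π * (t - θ))) * (sin_sq_add_cos_sq (π * u))
  rw [key, key, ← ht, mul_lt_mul_iff_right₀ (vonMisesDensity_pos θ κ t), Real.exp_lt_exp,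
    ← sub_pos]
  rw [← mul_pos_iff_of_pos_left (show (0:ℝ) < 2 by norm_num) (b := sin (π * u) * _)]
  ring_nf

/-- At a crossing of two distinct von Mises densities, the primitive of their difference starting
there has constant strict sign inside the period. -/
lemma primitive_pos_or_neg {θ θ' κ κ' t : ℝ}
    (hne : ¬ ∀ t ∈ Set.Ico (0:ℝ) 1, vonMisesDensity θ κ t = vonMisesDensity θ' κ' t)
    (ht : vonMisesDensity θ κ t = vonMisesDensity θ' κ' t) :
    (∀ v ∈ Set.Ioo t (t + 1), 0 < ∫ x in t..v, (vonMisesDensity θ κ x - vonMisesDensity θ' κ' x)) ∨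
    (∀ v ∈ Set.Ioo t (t + 1), ∫ x in t..v, (vonMisesDensity θ κ x - vonMisesDensity θ' κ' x) < 0)
    := by
  have hsin : ∀ u ∈ Set.Ioo (0:ℝ) 1, 0 < sin (π * u) := fun u hu =>
    sin_pos_of_pos_of_lt_pi (mul_pos pi_pos hu.1) (by nlinarith [pi_pos, hu.2])
  have hc := continuous_vonMisesDensity θ κ
  have hc' := continuous_vonMisesDensity θ' κ'
  have hi : ∫ x in t..t + 1, (vonMisesDensity θ κ x - vonMisesDensity θ' κ' x) = 0 := by
    rw [intervalIntegral.integral_sub (hc.intervalIntegrable _ _) (hc'.intervalIntegrable _ _),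
      integral_vonMisesDensity, integral_vonMisesDensity, sub_self]
  have hi' : ∫ x in t..t + 1, (vonMisesDensity θ' κ' x - vonMisesDensity θ κ x) = 0 := by
    rw [intervalIntegral.integral_sub (hc'.intervalIntegrable _ _) (hc.intervalIntegrable _ _),
      integral_vonMisesDensity, integral_vonMisesDensity, sub_self]
  have hlt := density_lt_iff ht
  have hgt := density_lt_iff ht.symm
  set A := κ * cos (2 * π * (t - θ)) - κ' * cos (2 * π * (t - θ')) with hA
  set B := κ' * sin (2 * π * (t - θ')) - κ * sin (2 * π * (t - θ)) with hB
  have hA' : κ' * cos (2 * π * (t - θ')) - κ * cos (2 * π * (t - θ)) = -A := by rw [hA]; ring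
  have hB' : κ * sin (2 * π * (t - θ)) - κ' * sin (2 * π * (t - θ')) = -B := by rw [hB]; ring
  rw [hA', hB'] at hgt
  rcases lt_trichotomy B 0 with hB0 | hB0 | hB0
  · right
    intro v hv
    have := integral_pos_of_sign (hc'.sub hc) (neg_pos.2 hB0) (a := -A) hi'
      (fun u hu hq => sub_pos.2 ((hgt u).2 (mul_pos (hsin u hu) hq)))
      (fun u hu hq => sub_neg.2 ((hlt u).2 (mul_pos (hsin u hu) (by linarith)))) hv
    have hflip : ∫ x in t..v, (vonMisesDensity θ κ x - vonMisesDensity θ' κ' x)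
        = -∫ x in t..v, (vonMisesDensity θ' κ' x - vonMisesDensity θ κ x) := by
      rw [← intervalIntegral.integral_neg]
      simp
    rw [hflip]
    exact neg_neg_of_pos this
  · exfalso
    rw [hB0] at hlt hgt
    -- now the difference of the densities has constant sign, namely that of `-A`
    rcases lt_trichotomy A 0 with hA0 | hA0 | hA0
    · refine absurd hi (ne_of_gt ?_)
      refine intervalIntegral.intervalIntegral_pos_of_pos_on
        ((hc.sub hc').intervalIntegrable _ _) (fun x hx => ?_) (by linarith)
      have hs := hsin (x - t) ⟨by linarith [hx.1], by linarith [hx.2]⟩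
      have := (hlt (x - t)).2 (mul_pos hs (by nlinarith))
      rw [add_sub_cancel] at this
      linarith
    · rw [hA0] at hlt hgt
      refine hne fun s _ => le_antisymm ?_ ?_
      · have := hlt (s - t)
        simp only [add_sub_cancel] at this
        refine not_lt.1 fun h => ?_
        simpa using this.1 h
      · have := hgt (s - t)
        simp only [add_sub_cancel] at this
        refine not_lt.1 fun h => ?_
        simpa using this.1 h
    · refine absurd hi' (ne_of_gt ?_)
      refine intervalIntegral.intervalIntegral_pos_of_pos_on
        ((hc'.sub hc).intervalIntegrable _ _) (fun x hx => ?_) (by linarith)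
      have hs := hsin (x - t) ⟨by linarith [hx.1], by linarith [hx.2]⟩
      have := (hgt (x - t)).2 (mul_pos hs (by nlinarith))
      rw [add_sub_cancel] at this
      linarith
  · left
    intro v hv
    exact integral_pos_of_sign (hc.sub hc') hB0 (a := A) hi
      (fun u hu hq => sub_pos.2 ((hlt u).2 (mul_pos (hsin u hu) hq)))
      (fun u hu hq => sub_neg.2 ((hgt u).2 (mul_pos (hsin u hu) (by linarith)))) hv

/-- At a crossing of two distinct von Mises densities, the difference of the distribution functions
has a strict global extremum. -/
lemma cdf_diff_strict_extremum {θ θ' κ κ' t : ℝ} (ht01 : t ∈ Set.Ico (0:ℝ) 1)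
    (hne : ¬ ∀ t ∈ Set.Ico (0:ℝ) 1, vonMisesDensity θ κ t = vonMisesDensity θ' κ' t)
    (ht : vonMisesDensity θ κ t = vonMisesDensity θ' κ' t) :
    (∀ s ∈ Set.Ico (0:ℝ) 1, s ≠ t →
      Fcdf (vonMisesMeasure θ κ) t - Fcdf (vonMisesMeasure θ' κ') t
        < Fcdf (vonMisesMeasure θ κ) s - Fcdf (vonMisesMeasure θ' κ') s) ∨
    (∀ s ∈ Set.Ico (0:ℝ) 1, s ≠ t →
      Fcdf (vonMisesMeasure θ κ) s - Fcdf (vonMisesMeasure θ' κ') s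
        < Fcdf (vonMisesMeasure θ κ) t - Fcdf (vonMisesMeasure θ' κ') t) := by
  have hc := continuous_vonMisesDensity θ κ
  have hc' := continuous_vonMisesDensity θ' κ'
  set D : ℝ → ℝ := fun x => vonMisesDensity θ κ x - vonMisesDensity θ' κ' x with hD
  have hDi : ∀ a b, IntervalIntegrable D volume a b := fun a b =>
    (hc.sub hc').intervalIntegrable a b
  have hF : ∀ s ∈ Set.Ico (0:ℝ) 1, Fcdf (vonMisesMeasure θ κ) s - Fcdf (vonMisesMeasure θ' κ') s
      = ∫ x in (0:ℝ)..s, D x := by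
    intro s hs
    rw [Fcdf_eq_integral θ κ hs, Fcdf_eq_integral θ' κ' hs, hD,
      intervalIntegral.integral_sub (hc.intervalIntegrable _ _) (hc'.intervalIntegrable _ _)]
  -- every `s ≠ t` has a representative modulo `1` in the open period starting at `t`
  have hv : ∀ s ∈ Set.Ico (0:ℝ) 1, s ≠ t → ∃ v ∈ Set.Ioo t (t + 1),
      ∫ x in t..v, D x = (∫ x in (0:ℝ)..s, D x) - ∫ x in (0:ℝ)..t, D x := by
    intro s hs hst
    rcases lt_or_gt_of_ne hst with h | h
    · refine ⟨s + 1, ⟨by linarith [hs.1, ht01.2], by linarith⟩, ?_⟩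
      have h0 : ∫ x in s..s + 1, D x = 0 := by
        rw [hD, intervalIntegral.integral_sub (hc.intervalIntegrable _ _)
          (hc'.intervalIntegrable _ _), integral_vonMisesDensity, integral_vonMisesDensity, sub_self]
      have h1 := intervalIntegral.integral_add_adjacent_intervals (hDi t s) (hDi s (s + 1))
      have h2 := intervalIntegral.integral_add_adjacent_intervals (hDi 0 t) (hDi t s)
      linarith
    · refine ⟨s, ⟨h, by linarith [hs.2, ht01.1]⟩, ?_⟩
      have h2 := intervalIntegral.integral_add_adjacent_intervals (hDi 0 t) (hDi t s)
      linarith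
  rcases primitive_pos_or_neg hne ht with h | h
  · left
    intro s hs hst
    obtain ⟨v, hvm, hve⟩ := hv s hs hst
    have := h v hvm
    rw [hF s hs, hF t ht01]
    linarith
  · right
    intro s hs hst
    obtain ⟨v, hvm, hve⟩ := hv s hs hst
    have := h v hvm
    rw [hF s hs, hF t ht01]
    linarith

/-- **assumption (A3) for von Mises distributions.** If `μ, ν` are von Mises
distributions with non-identical densities, then at every `t ∈ [0,1)` where `F_μ − F_ν`
meets its level median the two densities differ, i.e. the derivative of `F_μ − F_ν` is
nonzero there. -/
theorem vonMises_assumption_A3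
    (θ θ' : ℝ) (hθ : θ ∈ Set.Ico (0:ℝ) 1) (hθ' : θ' ∈ Set.Ico (0:ℝ) 1)
    (κ κ' : ℝ) (hκ : 0 ≤ κ) (hκ' : 0 ≤ κ')
    (hne : ¬ ∀ t ∈ Set.Ico (0:ℝ) 1, vonMisesDensity θ κ t = vonMisesDensity θ' κ' t)
    (μ ν : Measure ℝ)
    (hμ : μ = (volume.restrict (Set.Ico (0:ℝ) 1)).withDensity
      (fun t => ENNReal.ofReal (vonMisesDensity θ κ t)))
    (hν : ν = (volume.restrict (Set.Ico (0:ℝ) 1)).withDensity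
      (fun t => ENNReal.ofReal (vonMisesDensity θ' κ' t))) :
    ∀ t ∈ Set.Ico (0:ℝ) 1,
      Fcdf μ t - Fcdf ν t = levMed (fun s => Fcdf μ s - Fcdf ν s) →
      vonMisesDensity θ κ t ≠ vonMisesDensity θ' κ' t := by
  subst hμ hν
  intro t ht hmed hcross
  have hmeas : Measurable fun s => Fcdf (vonMisesMeasure θ κ) s - Fcdf (vonMisesMeasure θ' κ') s :=
    (measurable_Fcdf _).sub (measurable_Fcdf _)
  have hbd := abs_Fcdf_sub_le (vonMisesMeasure θ κ) (vonMisesMeasure θ' κ')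
  have hae : ∀ᵐ s ∂unifI, s ∈ Set.Ico (0:ℝ) 1 ∧ s ≠ t :=
    (ae_restrict_mem measurableSet_Ico).and (ae_restrict_of_ae (Measure.ae_ne volume t))
  rcases cdf_diff_strict_extremum ht hne hcross with h | h
  · exact levMed_ne_of_ae_gt hmeas hbd (hae.mono fun s hs => h s hs.1 hs.2) hmed
  · exact levMed_ne_of_ae_lt hmeas hbd (hae.mono fun s hs => h s hs.1 hs.2) hmed

end
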